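/- There is a constant C, depending only on φ, such that for all λ ≥ 1, all real a ≠ 0 and all b ∈ ℝ: |∫_ℝ φ²(ξ/λ) e^{i(a ξ² + b ξ)} dξ| ≤ C λ^{1/2} (λ |a|)^{-1/2}; equivalently, with a = λ^{-1}(t-s) for t ≠ s, |∫_ℝ φ²(ξ/λ) e^{i(λ^{-1}(t-s) ξ² + (x-y) ξ)} dξ| ≤ C λ^{1/2} |t-s|^{-1/2}. -/

import Mathlib

open MeasureTheory Real Complex

noncomputable section

/-- A smooth even bump equal to `1` on `[-1,1]` and supported in `(-2,2)`. -/
structure IsBump (φ : ℝ → ℝ) : Prop where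
  smooth : ContDiff ℝ (⊤ : ℕ∞) φ
  even : ∀ x, φ (-x) = φ x
  supp : Function.support φ ⊆ Set.Ioo (-2) 2
  one : ∀ x ∈ Set.Icc (-1 : ℝ) 1, φ x = 1

lemma fresnel_den (σ : ℝ) (hσ : σ ^ 2 = 1) (u : ℝ) :
    ‖(1 + 2 * I * σ * u ^ 2 : ℂ)‖ ^ 2 = 1 + 4 * u ^ 4 := by
  have : (1 + 2 * I * σ * u ^ 2 : ℂ) = ((1 : ℝ) : ℂ) + ((2 * σ * u ^ 2 : ℝ) : ℂ) * I := by
    push_cast; ring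
  rw [this, Complex.sq_norm, Complex.normSq_add_mul_I]
  linear_combination 4 * u ^ 4 * hσ

lemma fresnel_exp_norm (σ u : ℝ) : ‖cexp (I * σ * u ^ 2)‖ = 1 := by
  have : (I * σ * u ^ 2 : ℂ) = ((σ * u ^ 2 : ℝ) : ℂ) * I := by push_cast; ring
  rw [this, Complex.norm_exp_ofReal_mul_I]

lemma fresnel_bound (σ : ℝ) (hσ : σ ^ 2 = 1) (x : ℝ) :
    ‖∫ u in (0 : ℝ)..x, cexp (I * σ * u ^ 2)‖ ≤ 1 + 2 * π := by
  have hne : ∀ u : ℝ, (1 + 2 * I * σ * u ^ 2 : ℂ) ≠ 0 := by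
    intro u h
    have := fresnel_den σ hσ u
    rw [h, norm_zero] at this
    nlinarith [sq_nonneg (u ^ 2)]
  have hσ' : (σ : ℂ) ^ 2 = 1 := by exact_mod_cast hσ
  let K : ℝ → ℂ := fun u => cexp (I * σ * u ^ 2) * (u / (1 + 2 * I * σ * u ^ 2))
  let R : ℝ → ℂ := fun u => cexp (I * σ * u ^ 2) * (4 * I * σ * u ^ 2 / (1 + 2 * I * σ * u ^ 2) ^ 2)
  have hE : Continuous fun u : ℝ => cexp (I * σ * u ^ 2) := by fun_prop
  have hR : Continuous R := by
    refine hE.mul (Continuous.div (by fun_prop) (by fun_prop) fun u => pow_ne_zero _ (hne u))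
  have hK : ∀ u : ℝ, HasDerivAt K (cexp (I * σ * u ^ 2) - R u) u := by
    intro u
    have h1 : HasDerivAt (fun z : ℂ => I * σ * z ^ 2) (2 * I * σ * u) (u : ℂ) := by
      have := ((hasDerivAt_id (u : ℂ)).pow 2).const_mul (I * σ)
      refine this.congr_deriv ?_
      simp; ring
    have h2 : HasDerivAt (fun z : ℂ => 1 + 2 * I * σ * z ^ 2) (4 * I * σ * u) (u : ℂ) := by
      have := (((hasDerivAt_id (u : ℂ)).pow 2).const_mul (2 * I * σ)).const_add 1
      refine this.congr_deriv ?_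
      simp; ring
    have h3 := (h1.cexp.mul ((hasDerivAt_id (u : ℂ)).div h2 (hne u))).comp_ofReal
    refine h3.congr_deriv ?_
    have := hne u
    simp only [R, id, Pi.div_apply]
    generalize hD : (1 + 2 * I * σ * u ^ 2 : ℂ) = D at this ⊢
    generalize cexp (I * σ * u ^ 2) = E
    field_simp
    linear_combination (E * D) * hD
  have hRb : ∀ u : ℝ, ‖R u‖ ≤ 2 * (1 + u ^ 2)⁻¹ := by
    intro u
    have hs : |σ| = 1 := by
      rw [← sq_eq_sq₀ (abs_nonneg _) zero_le_one, sq_abs, hσ, one_pow]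
    simp only [R]
    rw [norm_mul, fresnel_exp_norm, norm_div, norm_pow, fresnel_den σ hσ]
    simp only [norm_mul, norm_I, norm_pow, Complex.norm_real, Real.norm_eq_abs, hs, sq_abs]
    norm_num
    rw [← div_eq_mul_inv, div_le_div_iff₀ (by positivity) (by positivity)]
    nlinarith [sq_nonneg (u ^ 2 - 1), sq_nonneg (2 * u ^ 2 - 1), sq_nonneg (u ^ 2)]
  have hKb : ∀ u : ℝ, ‖K u‖ ≤ 1 := by
    intro u
    simp only [K]
    rw [norm_mul, fresnel_exp_norm, norm_div, one_mul]
    have hp : 0 < ‖(1 + 2 * I * σ * u ^ 2 : ℂ)‖ := norm_pos_iff.2 (hne u)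
    rw [div_le_one hp, Complex.norm_real, Real.norm_eq_abs]
    refine abs_le_of_sq_le_sq ?_ hp.le
    rw [fresnel_den σ hσ]
    nlinarith [sq_nonneg (2 * u ^ 2 - 1), sq_nonneg (u ^ 2)]
  have hint : ∫ u in (0 : ℝ)..x, (cexp (I * σ * u ^ 2) - R u) = K x - K 0 :=
    intervalIntegral.integral_eq_sub_of_hasDerivAt (fun u _ => hK u)
      ((hE.sub hR).intervalIntegrable _ _)
  rw [intervalIntegral.integral_sub (hE.intervalIntegrable _ _) (hR.intervalIntegrable _ _)] at hint
  have hK0 : K 0 = 0 := by simp [K]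
  rw [hK0, sub_zero, sub_eq_iff_eq_add] at hint
  rw [hint]
  refine (norm_add_le _ _).trans (add_le_add (hKb x) ?_)
  have hgi : Integrable (fun u : ℝ => 2 * (1 + u ^ 2)⁻¹) := integrable_inv_one_add_sq.const_mul 2
  have hRi : Integrable R := hgi.mono' hR.aestronglyMeasurable (Filter.Eventually.of_forall hRb)
  calc ‖∫ u in (0 : ℝ)..x, R u‖ ≤ ∫ u in Set.uIoc 0 x, ‖R u‖ :=
        intervalIntegral.norm_integral_le_integral_norm_uIoc
    _ ≤ ∫ u, ‖R u‖ := setIntegral_le_integral hRi.norm (Filter.Eventually.of_forall fun _ => norm_nonneg _)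
    _ ≤ ∫ u : ℝ, 2 * (1 + u ^ 2)⁻¹ := integral_mono hRi.norm hgi hRb
    _ = 2 * π := by rw [integral_const_mul, integral_univ_inv_one_add_sq]

lemma osc_primitive (a b : ℝ) (ha : a ≠ 0) :
    ∃ H : ℝ → ℂ, (∀ ξ : ℝ, HasDerivAt H (cexp (I * (a * ξ ^ 2 + b * ξ))) ξ) ∧
      ∀ ξ, ‖H ξ‖ ≤ (1 + 2 * π) * (√|a|)⁻¹ := by
  obtain ⟨σ, hσ, hσa⟩ : ∃ σ : ℝ, σ ^ 2 = 1 ∧ σ * |a| = a := by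
    rcases lt_or_gt_of_ne ha with h | h
    · exact ⟨-1, by norm_num, by rw [abs_of_neg h]; ring⟩
    · exact ⟨1, by norm_num, by rw [abs_of_pos h]; ring⟩
  have hr : 0 < √|a| := Real.sqrt_pos.2 (abs_pos.2 ha)
  have hr2 : √|a| ^ 2 = |a| := Real.sq_sqrt (abs_nonneg a)
  set r := √|a| with hrdef
  have hE : Continuous fun u : ℝ => cexp (I * σ * u ^ 2) := by fun_prop
  let G : ℝ → ℂ := fun x => ∫ u in (0 : ℝ)..x, cexp (I * σ * u ^ 2)
  have hG : ∀ x : ℝ, HasDerivAt G (cexp (I * σ * x ^ 2)) x := fun x =>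
    (hE.integral_hasStrictDerivAt 0 x).hasDerivAt
  let c : ℝ := σ * b / (2 * r)
  let d : ℝ := -(σ * b ^ 2 / (4 * r ^ 2))
  refine ⟨fun ξ => cexp (d * I) * ((r⁻¹ : ℝ) : ℂ) * G (r * ξ + c), ?_, ?_⟩
  · intro ξ
    have hl : HasDerivAt (fun ξ : ℝ => r * ξ + c) r ξ := by
      simpa using ((hasDerivAt_id ξ).const_mul r).add_const c
    have h := ((hG (r * ξ + c)).scomp ξ hl).const_mul (cexp (d * I) * ((r⁻¹ : ℝ) : ℂ))
    refine h.congr_deriv ?_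
    have hph : a * ξ ^ 2 + b * ξ = d + σ * (r * ξ + c) ^ 2 := by
      simp only [c, d]
      rw [← hσa, ← hr2]
      field_simp
      linear_combination (-16 * r ^ 2 * ξ * b - 4 * σ * b ^ 2) * hσ
    have hphC : (a * ξ ^ 2 + b * ξ : ℂ) = d + σ * ((r * ξ + c : ℝ) : ℂ) ^ 2 := by
      exact_mod_cast hph
    rw [hphC]
    have : (I * (d + σ * ((r * ξ + c : ℝ) : ℂ) ^ 2) : ℂ) =
      d * I + I * σ * ((r * ξ + c : ℝ) : ℂ) ^ 2 := by ring
    rw [this, Complex.exp_add, Complex.real_smul]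
    have hrC : (r : ℂ) ≠ 0 := by exact_mod_cast hr.ne'
    rw [Complex.ofReal_inv]
    field_simp
  · intro ξ
    rw [norm_mul, norm_mul, Complex.norm_exp_ofReal_mul_I, one_mul, Complex.norm_real,
      Real.norm_of_nonneg (inv_nonneg.2 hr.le), mul_comm]
    exact mul_le_mul_of_nonneg_right (fresnel_bound σ hσ _) (inv_nonneg.2 hr.le)

lemma osc_main (φ : ℝ → ℝ) (hφ : IsBump φ) (lam : ℝ) (hl : 1 ≤ lam) (a b : ℝ) (ha : a ≠ 0) :
    ‖∫ ξ : ℝ, ((φ (ξ / lam) : ℝ) : ℂ) ^ 2 * cexp (I * (a * ξ ^ 2 + b * ξ))‖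
      ≤ (1 + 2 * π) * (∫ x, |deriv (fun x => φ x ^ 2) x|) * (√|a|)⁻¹ := by
  obtain ⟨H, hH, hHb⟩ := osc_primitive a b ha
  have hl0 : 0 < lam := by linarith
  set ψ : ℝ → ℝ := fun x => φ x ^ 2 with hψ
  have hψs : ContDiff ℝ (⊤ : ℕ∞) ψ := hφ.smooth.pow 2
  have hφc : HasCompactSupport φ := by
    refine HasCompactSupport.of_support_subset_isCompact (isCompact_Icc (a := -2) (b := 2)) ?_
    exact hφ.supp.trans Set.Ioo_subset_Icc_self
  have hψc : HasCompactSupport ψ := by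
    refine hφc.mono ?_
    intro x hx h
    apply hx
    simp [hψ, h]
  have hψd : ∀ x, HasDerivAt ψ (deriv ψ x) x := fun x =>
    (hψs.differentiable (by simp) x).hasDerivAt
  have hψ'c : Continuous (deriv ψ) := hψs.continuous_deriv (by simp)
  have hψ'i : Integrable (deriv ψ) := hψ'c.integrable_of_hasCompactSupport hψc.deriv
  have hψi : Integrable ψ := hψs.continuous.integrable_of_hasCompactSupport hψc
  have hHc : Continuous H := continuous_iff_continuousAt.2 fun x => (hH x).continuousAt
  let u : ℝ → ℂ := fun ξ => ((ψ (ξ / lam) : ℝ) : ℂ)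
  let u' : ℝ → ℂ := fun ξ => ((deriv ψ (ξ / lam) * lam⁻¹ : ℝ) : ℂ)
  have hu : ∀ x, HasDerivAt u (u' x) x := by
    intro x
    have h1 : HasDerivAt (fun x : ℝ => x / lam) lam⁻¹ x := by
      simpa using (hasDerivAt_id x).div_const lam
    exact ((hψd (x / lam)).comp x h1).ofReal_comp
  have hui : Integrable u := (hψi.comp_div hl0.ne').ofReal
  have hu'i : Integrable u' := ((hψ'i.comp_div hl0.ne').mul_const _).ofReal
  have hEn : ∀ ξ : ℝ, ‖cexp (I * (a * ξ ^ 2 + b * ξ))‖ = 1 := by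
    intro ξ
    have : (I * (a * ξ ^ 2 + b * ξ) : ℂ) = ((a * ξ ^ 2 + b * ξ : ℝ) : ℂ) * I := by
      push_cast; ring
    rw [this, Complex.norm_exp_ofReal_mul_I]
  have hEc : Continuous fun ξ : ℝ => cexp (I * (a * ξ ^ 2 + b * ξ)) := by fun_prop
  have hibp := integral_mul_deriv_eq_deriv_mul_of_integrable (u := u) (v := H) (u' := u')
    (fun x _ => hu x) (fun x _ => hH x)
    (hui.mul_bdd (c := 1) hEc.aestronglyMeasurable (Filter.Eventually.of_forall fun x => (hEn x).le))
    (hu'i.mul_bdd hHc.aestronglyMeasurable (Filter.Eventually.of_forall hHb))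
    (hui.mul_bdd hHc.aestronglyMeasurable (Filter.Eventually.of_forall hHb))
  have heq : ∀ ξ : ℝ, ((φ (ξ / lam) : ℝ) : ℂ) ^ 2 = u ξ := by
    intro ξ; simp [u, hψ]
  simp_rw [heq]
  rw [hibp, norm_neg]
  have hscale : ∫ x, ‖u' x‖ = ∫ x, |deriv ψ x| := by
    have : ∀ x, ‖u' x‖ = |deriv ψ (x / lam)| * lam⁻¹ := by
      intro x
      simp only [u']
      rw [Complex.norm_real, Real.norm_eq_abs, abs_mul, abs_of_pos (inv_pos.2 hl0)]
    simp_rw [this]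
    rw [integral_mul_const, Measure.integral_comp_div (fun x => |deriv ψ x|) lam, abs_of_pos hl0,
      smul_eq_mul]
    field_simp
  calc ‖∫ x, u' x * H x‖ ≤ ∫ x, ‖u' x‖ * ((1 + 2 * π) * (√|a|)⁻¹) := by
        refine norm_integral_le_of_norm_le (hu'i.norm.mul_const _) (Filter.Eventually.of_forall ?_)
        intro x
        rw [norm_mul]
        exact mul_le_mul_of_nonneg_left (hHb x) (norm_nonneg _)
    _ = _ := by rw [integral_mul_const, hscale]; ring

/-- the stationary phase bound (estimate (6.19)) for the oscillatory
integral `∫ φ²(ξ/λ) e^{i(aξ² + bξ)} dξ`. -/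
theorem stationary_phase_bound (φ : ℝ → ℝ) (hφ : IsBump φ) :
    ∃ C : ℝ, 0 < C ∧
      ∀ (lam : ℝ), 1 ≤ lam →
        (∀ (a b : ℝ), a ≠ 0 →
          ‖∫ ξ : ℝ, ((φ (ξ / lam) : ℝ) : ℂ) ^ 2 *
              Complex.exp (Complex.I * (a * ξ ^ 2 + b * ξ))‖
            ≤ C * lam ^ ((1 : ℝ) / 2) * (lam * |a|) ^ (-(1 : ℝ) / 2))
        ∧ (∀ (x y t s : ℝ), t ≠ s →
          ‖∫ ξ : ℝ, ((φ (ξ / lam) : ℝ) : ℂ) ^ 2 *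
              Complex.exp (Complex.I * (((t - s) / lam) * ξ ^ 2 + (x - y) * ξ))‖
            ≤ C * lam ^ ((1 : ℝ) / 2) * |t - s| ^ (-(1 : ℝ) / 2)) := by
  have hI : 0 ≤ ∫ x, |deriv (fun x => φ x ^ 2) x| := integral_nonneg fun _ => abs_nonneg _
  set J := ∫ x, |deriv (fun x => φ x ^ 2) x| with hJ
  have key : ∀ (lam : ℝ), 1 ≤ lam → ∀ (a b : ℝ), a ≠ 0 →
          ‖∫ ξ : ℝ, ((φ (ξ / lam) : ℝ) : ℂ) ^ 2 *
              Complex.exp (Complex.I * (a * ξ ^ 2 + b * ξ))‖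
            ≤ ((1 + 2 * π) * J + 1) * lam ^ ((1 : ℝ) / 2) * (lam * |a|) ^ (-(1 : ℝ) / 2) := by
    intro lam hl a b ha
    have hl0 : 0 < lam := by linarith
    have hr : 0 < √|a| := Real.sqrt_pos.2 (abs_pos.2 ha)
    have hlr : 0 < √lam := Real.sqrt_pos.2 hl0
    refine (osc_main φ hφ lam hl a b ha).trans ?_
    have h1 : lam ^ ((1 : ℝ) / 2) * (lam * |a|) ^ (-(1 : ℝ) / 2) = (√|a|)⁻¹ := by
      rw [neg_div, Real.rpow_neg (by positivity), ← Real.sqrt_eq_rpow, ← Real.sqrt_eq_rpow,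
        Real.sqrt_mul hl0.le]
      field_simp
    rw [mul_assoc _ (lam ^ _), h1]
    exact mul_le_mul_of_nonneg_right (by linarith) (inv_nonneg.2 hr.le)
  refine ⟨(1 + 2 * π) * J + 1, by positivity, fun lam hl => ⟨key lam hl, ?_⟩⟩
  intro x y t s hts
  have hl0 : 0 < lam := by linarith
  have h := key lam hl ((t - s) / lam) (x - y) (div_ne_zero (sub_ne_zero.2 hts) hl0.ne')
  have h2 : lam * |(t - s) / lam| = |t - s| := by
    rw [abs_div, abs_of_pos hl0]; field_simp
  rw [h2] at h
  push_cast at h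
  exact h
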